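/- Let D ⊆ ℂ be an open connected set, H a complex Hilbert space, and F : D → L(H) an analytic operator-valued function such that F(λ) is a compact operator for every λ ∈ D. Suppose there exists λ₀ ∈ D such that Id − F(λ₀) is boundedly invertible. Then the set S := {λ ∈ D : Id − F(λ) is not boundedly invertible} has no accumulation point in D, and the map λ ↦ (Id − F(λ))⁻¹ is analytic on D \ S. -/

import Mathlib

open Filter Topology

/-!
Near a point `z₁ ∈ D` the invertibility of `1 - F z` is governed by one scalar analytic function.
Since `F z₁` is compact, there is a finite-dimensional subspace `V` such that the orthogonal
projection `Q` onto `Vᗮ` satisfies `‖Q F z₁‖ < 1` (`exists_finiteDimensional_norm_lt`). For `z`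
near `z₁`, `A z = 1 - Q F z` is then invertible, and with `P = 1 - Q` one has
`1 - F z = (1 - P F z (A z)⁻¹) A z`. As `P` factors through `V`, invertibility of the first factor
is equivalent to that of an endomorphism of `V` (`isUnit_one_sub_comp_comm`), that is, to the
non-vanishing of a determinant depending analytically on `z`.

By isolation of zeros, each point of `D` has either a neighborhood on which `1 - F z` is never
invertible, or a punctured neighborhood on which it always is
(`eventually_not_isUnit_or_eventually_isUnit`). Both conditions are open and they exclude each
other; connectedness of `D` and the point `z₀` leave only the second. Analyticity of the inverse
is analyticity of inversion in a Banach algebra.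
-/

/-- A compact operator is almost annihilated by the projection onto the orthogonal complement of a
suitable finite-dimensional subspace, namely the span of a finite net of the image of the unit
ball. -/
lemma exists_finiteDimensional_norm_lt {H : Type*} [NormedAddCommGroup H] [InnerProductSpace ℂ H]
    [CompleteSpace H] (K : H →L[ℂ] H) (hK : IsCompactOperator K) :
    ∃ V : Submodule ℂ H, FiniteDimensional ℂ V ∧ ‖Vᗮ.starProjection * K‖ < 1 := by
  have hc : IsCompact (closure (K '' Metric.closedBall 0 1)) :=
    IsCompactOperator.isCompact_closure_image_closedBall (f := (K : H →ₗ[ℂ] H)) hK 1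
  obtain ⟨t, ht, hcov⟩ := Metric.totallyBounded_iff.1 hc.totallyBounded (1 / 2) (by norm_num)
  have hfin : FiniteDimensional ℂ (Submodule.span ℂ t) := FiniteDimensional.span_of_finite ℂ ht
  refine ⟨Submodule.span ℂ t, hfin, lt_of_le_of_lt ?_ (by norm_num : (1 / 2 : ℝ) < 1)⟩
  refine ContinuousLinearMap.opNorm_le_of_unit_norm (by norm_num) fun x hx => ?_
  have hx' : K x ∈ closure (K '' Metric.closedBall 0 1) :=
    subset_closure ⟨x, by simp [hx], rfl⟩
  obtain ⟨y, hy, hxy⟩ := Set.mem_iUnion₂.1 (hcov hx')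
  have h0 : (Submodule.span ℂ t)ᗮ.starProjection y = 0 :=
    Submodule.starProjection_orthogonal_apply_eq_zero (Submodule.subset_span hy)
  calc ‖((Submodule.span ℂ t)ᗮ.starProjection * K) x‖
      = ‖(Submodule.span ℂ t)ᗮ.starProjection (K x - y)‖ := by simp [map_sub, h0]
    _ ≤ ‖K x - y‖ := Submodule.norm_starProjection_apply_le _ _
    _ ≤ 1 / 2 := by rw [← dist_eq_norm]; exact (Metric.mem_ball.1 hxy).le

/-- If `C` inverts `1 - B A`, then `1 + A C B` inverts `1 - A B`. -/
lemma isUnit_one_sub_comp_of_swap {E G : Type*} [NormedAddCommGroup E] [NormedSpace ℂ E]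
    [NormedAddCommGroup G] [NormedSpace ℂ G] (A : E →L[ℂ] G) (B : G →L[ℂ] E)
    (h : IsUnit (1 - B ∘L A)) : IsUnit (1 - A ∘L B) := by
  obtain ⟨C, h1, h2⟩ := isUnit_iff_exists.1 h
  refine isUnit_iff_exists.2 ⟨1 + A ∘L C ∘L B, ?_, ?_⟩
  · ext x
    have := congrArg A (DFunLike.congr_fun h1 (B x))
    simp only [sub_mul, mul_add, mul_apply_eq_comp, sub_apply, add_apply,
      ContinuousLinearMap.comp_apply, one_apply_eq_self, map_sub] at this ⊢
    rw [← this]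
    abel
  · ext x
    have := congrArg A (DFunLike.congr_fun h2 (B x))
    simp only [mul_sub, add_mul, mul_apply_eq_comp, sub_apply, add_apply,
      ContinuousLinearMap.comp_apply, one_apply_eq_self, map_sub] at this ⊢
    rw [sub_eq_iff_eq_add] at this
    rw [this]
    abel

lemma isUnit_one_sub_comp_comm {E G : Type*} [NormedAddCommGroup E] [NormedSpace ℂ E]
    [NormedAddCommGroup G] [NormedSpace ℂ G] (A : E →L[ℂ] G) (B : G →L[ℂ] E) :
    IsUnit (1 - A ∘L B) ↔ IsUnit (1 - B ∘L A) :=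
  ⟨isUnit_one_sub_comp_of_swap B A, isUnit_one_sub_comp_of_swap A B⟩

lemma isUnit_iff_det_ne_zero {V : Type*} [NormedAddCommGroup V] [NormedSpace ℂ V]
    [FiniteDimensional ℂ V] (T : V →L[ℂ] V) :
    IsUnit T ↔ LinearMap.det (T : V →ₗ[ℂ] V) ≠ 0 := by
  rw [← isUnit_iff_ne_zero, ← LinearMap.isUnit_iff_isUnit_det,
    ← MulEquiv.isUnit_map (Module.End.toContinuousLinearMap V)]
  rfl

lemma analyticAt_det {V : Type*} [NormedAddCommGroup V] [NormedSpace ℂ V]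
    [FiniteDimensional ℂ V] {M : ℂ → V →L[ℂ] V} {z : ℂ} (hM : AnalyticAt ℂ M z) :
    AnalyticAt ℂ (fun w => LinearMap.det (M w : V →ₗ[ℂ] V)) z := by
  let b := Module.finBasis ℂ V
  simp_rw [← LinearMap.det_toMatrix b, Matrix.det_apply]
  refine Finset.analyticAt_fun_sum _ fun σ _ => ?_
  refine AnalyticAt.const_smul (Finset.analyticAt_fun_prod _ fun i _ => ?_)
  simp only [LinearMap.toMatrix_apply]
  exact ((LinearMap.toContinuousLinearMap (b.coord (σ i))).analyticAt _).comp
    ((ContinuousLinearMap.apply ℂ V (b i)).analyticAt _ |>.comp hM)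

/-- Isolation of zeros for the invertibility of `1 - F w` near a point where `F` is compact: only
compactness at the centre `z` is needed, since the reduction to a determinant persists nearby by
continuity. -/
lemma eventually_not_isUnit_or_eventually_isUnit {H : Type*} [NormedAddCommGroup H]
    [InnerProductSpace ℂ H] [CompleteSpace H] {F : ℂ → H →L[ℂ] H} {z : ℂ}
    (hF : AnalyticAt ℂ F z) (hK : IsCompactOperator (F z)) :
    (∀ᶠ w in 𝓝 z, ¬ IsUnit (1 - F w)) ∨ ∀ᶠ w in 𝓝[≠] z, IsUnit (1 - F w) := by
  obtain ⟨V, hV, hlt⟩ := exists_finiteDimensional_norm_lt (F z) hK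
  set Q : H →L[ℂ] H := Vᗮ.starProjection with hQ
  let A : ℂ → H →L[ℂ] H := fun w => 1 - Q * F w
  have hA : AnalyticAt ℂ A z := analyticAt_const.sub (analyticAt_const.mul hF)
  have hAunit : ∀ᶠ w in 𝓝 z, IsUnit (A w) := by
    have hcont : ContinuousAt (fun w => ‖Q * F w‖) z :=
      (analyticAt_const.mul hF).continuousAt.norm
    filter_upwards [hcont.eventually (gt_mem_nhds hlt)] with w hw
    exact isUnit_one_sub_of_norm_lt_one hw
  let B : ℂ → H →L[ℂ] V := fun w => V.orthogonalProjectionOnto ∘L (F w * Ring.inverse (A w))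
  let M : ℂ → V →L[ℂ] V := fun w => 1 - B w ∘L V.subtypeL
  have hAinv : AnalyticAt ℂ (fun w => Ring.inverse (A w)) z := by
    obtain ⟨u, hu⟩ := hAunit.self_of_nhds
    exact AnalyticAt.fun_comp (hu ▸ analyticAt_inverse u) hA
  have hM : AnalyticAt ℂ M z := by
    refine analyticAt_const.sub ?_
    exact (((ContinuousLinearMap.compL ℂ V H V).flip V.subtypeL).analyticAt _).comp
      (((ContinuousLinearMap.compL ℂ H H V) V.orthogonalProjectionOnto).analyticAt _ |>.comp
        (hF.mul hAinv))
  have key : ∀ᶠ w in 𝓝 z, (IsUnit (1 - F w) ↔ LinearMap.det (M w : V →ₗ[ℂ] V) ≠ 0) := by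
    filter_upwards [hAunit] with w hw
    have hPQ : V.starProjection = 1 - Q := by
      ext x; simp [hQ, Submodule.starProjection_orthogonal_val]
    have hfac : 1 - F w = (1 - V.subtypeL ∘L B w) * A w := by
      have h1 : V.subtypeL ∘L B w = V.starProjection * (F w * Ring.inverse (A w)) := rfl
      rw [h1, hPQ, sub_mul, mul_assoc, mul_assoc, Ring.inverse_mul_cancel _ hw]
      simp only [A]
      noncomm_ring
    rw [← isUnit_iff_det_ne_zero, hfac, ← isUnit_one_sub_comp_comm]
    obtain ⟨u, hu⟩ := hw
    rw [← hu, Units.isUnit_mul_units]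
  rcases (analyticAt_det hM).eventually_eq_zero_or_eventually_ne_zero with h | h
  · left
    filter_upwards [h, key] with w hw hk
    simp [hk, hw]
  · right
    filter_upwards [h, key.filter_mono nhdsWithin_le_nhds] with w hw hk
    exact hk.2 hw

/-- Analytic Fredholm theorem, second alternative: if an analytic family `F` of
compact operators on a complex Hilbert space, defined on an open connected
`D ⊆ ℂ`, is such that `Id - F λ₀` is invertible for some `λ₀ ∈ D`, then the set
`S` of points of `D` where `Id - F λ` is not invertible has no accumulation point
in `D`, and `λ ↦ (Id - F λ)⁻¹` is analytic on `D \ S`. -/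
theorem analytic_fredholm_second_alternative
    {H : Type*} [NormedAddCommGroup H] [InnerProductSpace ℂ H] [CompleteSpace H]
    (D : Set ℂ) (hDopen : IsOpen D) (hDconn : IsConnected D)
    (F : ℂ → H →L[ℂ] H) (hFanalytic : AnalyticOnNhd ℂ F D)
    (hFcompact : ∀ z ∈ D, IsCompactOperator (F z))
    (hinv : ∃ z₀ ∈ D, IsUnit (1 - F z₀)) :
    (∀ z ∈ D, ∃ U ∈ 𝓝 z, U ∩ {w ∈ D | ¬ IsUnit (1 - F w)} ⊆ {z}) ∧
      AnalyticOnNhd ℂ (fun z => Ring.inverse (1 - F z))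
        (D \ {w ∈ D | ¬ IsUnit (1 - F w)}) := by
  have hdich := fun z hz =>
    eventually_not_isUnit_or_eventually_isUnit (hFanalytic z hz) (hFcompact z hz)
  have hopen1 : IsOpen {z | ∀ᶠ w in 𝓝[≠] z, IsUnit (1 - F w)} := by
    rw [isOpen_iff_mem_nhds]
    intro z hz
    have h2 : ∀ᶠ x in 𝓝[≠] z, ∀ᶠ w in 𝓝[≠] x, IsUnit (1 - F w) := by
      filter_upwards [(eventually_nhdsWithin_eventually_nhds_iff_of_isOpen
        isOpen_compl_singleton).2 hz] with x hx
      exact hx.filter_mono nhdsWithin_le_nhds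
    rw [eventually_nhdsWithin_iff] at h2
    filter_upwards [h2] with x hx
    by_cases hxz : x = z
    · rw [hxz]; exact hz
    · exact hx hxz
  have hopen2 : IsOpen {z | ∀ᶠ w in 𝓝 z, ¬ IsUnit (1 - F w)} := isOpen_setOfPred_eventually_nhds
  have hdisj : Disjoint {z | ∀ᶠ w in 𝓝[≠] z, IsUnit (1 - F w)}
      {z | ∀ᶠ w in 𝓝 z, ¬ IsUnit (1 - F w)} := by
    rw [Set.disjoint_left]
    intro z h1 h2
    obtain ⟨w, hw1, hw2⟩ := (Filter.Eventually.and (show ∀ᶠ w in 𝓝[≠] z, IsUnit (1 - F w) from h1)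
      ((show ∀ᶠ w in 𝓝 z, ¬ IsUnit (1 - F w) from h2).filter_mono nhdsWithin_le_nhds)).exists
    exact hw2 hw1
  obtain ⟨z₀, hz₀, hu₀⟩ := hinv
  have hsub : D ⊆ {z | ∀ᶠ w in 𝓝[≠] z, IsUnit (1 - F w)} := by
    refine hDconn.isPreconnected.subset_left_of_subset_union hopen1 hopen2 hdisj
      (fun z hz => (hdich z hz).symm) ⟨z₀, hz₀, ?_⟩
    exact (hdich z₀ hz₀).resolve_left fun h => h.self_of_nhds hu₀
  refine ⟨fun z hz => ?_, fun z hz => ?_⟩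
  · refine ⟨{w | w ≠ z → IsUnit (1 - F w)}, eventually_nhdsWithin_iff.1 (hsub hz), ?_⟩
    rintro w ⟨hw, -, hw'⟩
    by_contra hne
    exact hw' (hw hne)
  · obtain ⟨u, hu⟩ : IsUnit (1 - F z) := by
      by_contra h
      exact hz.2 ⟨hz.1, h⟩
    exact AnalyticAt.fun_comp (hu ▸ analyticAt_inverse u) (analyticAt_const.sub (hFanalytic z hz.1))
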